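/- Stirling series remainder bound with three Bernoulli terms: for every real x > 0, | ln Γ(x) − ( (x − 1/2) ln x − x + (1/2) ln(2π) + 1/(12x) − 1/(360x³) + 1/(1260x⁵) ) | ≤ 1/(1680 x⁷). -/

import Mathlib

open Real

/-!
For `k ≠ 0` put `Jₖ(x) = ∫₀¹ Bₖ(t) / (k (x + t)ᵏ) dt`. Since `Bₖ₊₁' = (k + 1) Bₖ`, integrating by
parts with the antiderivative `(Bₖ₊₁ - c) / (k + 1)` of `Bₖ` gives two facts.

With `c = 0`: `J₂ₙ₊₃ - J₂ₙ₊₁` is the decrement over `[x, x + 1]` of the `n`-th term of the Stirling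
series. As `-J₁` is the decrement of `log Γ(x) - ((x - 1/2) log x - x + (1/2) log (2π))`, the
remainder `Rₙ` of the series after `n` terms has decrement `-J₂ₙ₊₁`.

With `c = B₂ₙ₊₂`: the boundary terms vanish, and `-J₂ₙ₊₁` becomes the integral over `[0, 1]` of
`(B₂ₙ₊₂ - B₂ₙ₊₂(t)) / ((2n + 2) (x + t)²ⁿ⁺²)`, which has the sign `(-1)ⁿ` by the Fourier cosine
series of `B₂ₙ₊₂(t)`.

So `m ↦ (-1)ⁿ Rₙ(x + m)` decreases; it tends to `0` by Euler's limit formula for `Γ` and Stirling's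
formula for `m!`, hence `(-1)ⁿ Rₙ(x) ≥ 0`. Thus `Rₙ` and `Rₙ₊₁` have opposite signs, and both are
bounded by their difference, the first omitted term.
-/

open Filter Topology Set

/-! ### Bernoulli numbers and polynomials -/

lemma bernoulli_four : bernoulli 4 = -1 / 30 := by
  rw [bernoulli_eq_bernoulli'_of_ne_one (by decide), bernoulli'_four]

lemma bernoulli_six : bernoulli 6 = 1 / 42 := by
  have h5 : bernoulli' 5 = 0 := bernoulli'_eq_zero_of_odd (by decide) (by decide)
  rw [bernoulli_eq_bernoulli'_of_ne_one (by decide), bernoulli'_def]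
  norm_num [Finset.sum_range_succ, h5, Nat.choose]

lemma bernoulli_eight : bernoulli 8 = -1 / 30 := by
  have h5 : bernoulli' 5 = 0 := bernoulli'_eq_zero_of_odd (by decide) (by decide)
  have h6 : bernoulli' 6 = 1 / 42 := by
    rw [← bernoulli_eq_bernoulli'_of_ne_one (by decide), bernoulli_six]
  have h7 : bernoulli' 7 = 0 := bernoulli'_eq_zero_of_odd (by decide) (by decide)
  rw [bernoulli_eq_bernoulli'_of_ne_one (by decide), bernoulli'_def]
  norm_num [Finset.sum_range_succ, h5, h6, h7, Nat.choose]

lemma neg_one_pow_mul_bernoulliFun_sub_bernoulli_nonneg {k : ℕ} (hk : k ≠ 0) {t : ℝ}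
    (ht : t ∈ Icc (0 : ℝ) 1) :
    0 ≤ (-1) ^ k * (bernoulliFun (2 * k) t - bernoulli (2 * k)) := by
  have hle := hasSum_le (fun n : ℕ => by gcongr; simpa using cos_le_one (2 * π * n * t))
    (hasSum_one_div_nat_pow_mul_cos hk ht)
    (hasSum_one_div_nat_pow_mul_cos hk (left_mem_Icc.2 zero_le_one))
  have hconst : (0 : ℝ) < (2 * π) ^ (2 * k) / 2 / (2 * k).factorial := by positivity
  rw [← bernoulliFun, ← bernoulliFun, bernoulliFun_eval_zero] at hle
  refine nonneg_of_mul_nonneg_right ?_ hconst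
  linear_combination hle

/-- The integral `∫₀¹ Bₖ(t) / (k (x + t)ᵏ) dt`, through which the remainder of the Stirling series
is expressed. It is `0` for `k = 0`, by the convention on division by zero. -/
noncomputable def bernoulliIntegral (k : ℕ) (x : ℝ) : ℝ :=
  ∫ t in 0..1, bernoulliFun k t / (k * (x + t) ^ k)

lemma hasDerivAt_bernoulliFun_sub_div_mul_pow {k : ℕ} (hk : k ≠ 0) (c : ℝ) {x t : ℝ}
    (hxt : x + t ≠ 0) :
    HasDerivAt (fun t => (bernoulliFun (k + 1) t - c) / (k * (k + 1) * (x + t) ^ k))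
      (bernoulliFun k t / (k * (x + t) ^ k) -
        (bernoulliFun (k + 1) t - c) / ((k + 1) * (x + t) ^ (k + 1))) t := by
  have hpow : HasDerivAt (fun t => k * (k + 1) * (x + t) ^ k)
      (k * (k + 1) * (k * (x + t) ^ (k - 1))) t := by
    simpa using! (((hasDerivAt_id t).const_add x).pow k).const_mul (k * (k + 1) : ℝ)
  have hnum := (hasDerivAt_bernoulliFun (k + 1) t).sub_const c
  refine (hnum.div hpow (by positivity)).congr_deriv ?_
  obtain ⟨m, rfl⟩ := Nat.exists_eq_succ_of_ne_zero hk
  simp only [Nat.succ_eq_add_one, Nat.add_sub_cancel, Nat.cast_add, Nat.cast_one]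
  field_simp
  ring

section
variable {x : ℝ} (hx : 0 < x)
include hx

lemma intervalIntegrable_div_mul_add_pow {f : ℝ → ℝ} (hf : Continuous f) {c : ℝ} (hc : c ≠ 0)
    (k : ℕ) :
    IntervalIntegrable (fun t => f t / (c * (x + t) ^ k)) MeasureTheory.volume 0 1 := by
  refine ContinuousOn.intervalIntegrable_of_Icc zero_le_one ?_
  refine hf.continuousOn.div (by fun_prop) fun t ht => ?_
  have : 0 < x + t := by linarith [ht.1]
  positivity

lemma bernoulliIntegral_eq_add_integral {k : ℕ} (hk : k ≠ 0) (c : ℝ) :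
    bernoulliIntegral k x =
      (bernoulli (k + 1) - c) / (k * (k + 1)) * (1 / (x + 1) ^ k - 1 / x ^ k) +
        ∫ t in 0..1, (bernoulliFun (k + 1) t - c) / ((k + 1) * (x + t) ^ (k + 1)) := by
  have hderiv (t : ℝ) (ht : t ∈ uIcc (0 : ℝ) 1) :=
    hasDerivAt_bernoulliFun_sub_div_mul_pow hk c (x := x) (t := t)
      (by rw [uIcc_of_le zero_le_one] at ht; linarith [ht.1])
  have hint := intervalIntegrable_div_mul_add_pow hx (continuous_bernoulliFun k)
    (Nat.cast_ne_zero.2 hk) k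
  have hint_succ := intervalIntegrable_div_mul_add_pow hx
    (f := fun t => bernoulliFun (k + 1) t - c) (by fun_prop) (Nat.cast_add_one_ne_zero k) (k + 1)
  have hFTC := intervalIntegral.integral_eq_sub_of_hasDerivAt hderiv (hint.sub hint_succ)
  rw [intervalIntegral.integral_sub hint hint_succ,
    bernoulliFun_endpoints_eq_of_ne_one (by simpa using hk), bernoulliFun_eval_zero] at hFTC
  rw [bernoulliIntegral, ← sub_eq_iff_eq_add, hFTC, add_zero]
  field_simp

lemma bernoulliIntegral_eq_add_bernoulliIntegral_succ {k : ℕ} (hk : k ≠ 0) :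
    bernoulliIntegral k x =
      bernoulli (k + 1) / (k * (k + 1)) * (1 / (x + 1) ^ k - 1 / x ^ k) +
        bernoulliIntegral (k + 1) x := by
  simpa [bernoulliIntegral] using bernoulliIntegral_eq_add_integral hx hk 0

lemma bernoulliIntegral_eq_integral_bernoulliFun_sub {k : ℕ} (hk : k ≠ 0) :
    bernoulliIntegral k x =
      ∫ t in 0..1,
        (bernoulliFun (k + 1) t - bernoulli (k + 1)) / ((k + 1) * (x + t) ^ (k + 1)) := by
  simpa using bernoulliIntegral_eq_add_integral hx hk (bernoulli (k + 1))

lemma bernoulliIntegral_one :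
    bernoulliIntegral 1 x = 1 - (x + 1 / 2) * (log (x + 1) - log x) := by
  have hderiv : ∀ t ∈ uIcc (0 : ℝ) 1, HasDerivAt (fun t => t - (x + 1 / 2) * log (x + t))
      (bernoulliFun 1 t / ((1 : ℕ) * (x + t) ^ 1)) t := by
    intro t ht
    rw [uIcc_of_le zero_le_one] at ht
    have hxt : x + t ≠ 0 := by linarith [ht.1]
    refine ((hasDerivAt_id t).sub
      ((((hasDerivAt_id t).const_add x).log hxt).const_mul (x + 1 / 2))).congr_deriv ?_
    simp only [id, bernoulliFun_one, Nat.cast_one, one_mul, pow_one]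
    field_simp
    ring
  rw [bernoulliIntegral, intervalIntegral.integral_eq_sub_of_hasDerivAt hderiv
    (intervalIntegrable_div_mul_add_pow hx (continuous_bernoulliFun 1) (by simp) 1), add_zero]
  ring

lemma neg_one_pow_mul_bernoulliIntegral_nonneg (n : ℕ) :
    0 ≤ (-1) ^ (n + 1) * bernoulliIntegral (2 * n + 1) x := by
  rw [bernoulliIntegral_eq_integral_bernoulliFun_sub hx (by lia),
    ← intervalIntegral.integral_const_mul]
  refine intervalIntegral.integral_nonneg zero_le_one fun t ht => ?_
  have hxt : 0 < x + t := by linarith [ht.1]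
  rw [← mul_div_assoc]
  exact div_nonneg (neg_one_pow_mul_bernoulliFun_sub_bernoulli_nonneg n.succ_ne_zero ht)
    (by positivity)

end

/-! ### The Stirling series -/

/-- The `k`-th term `B₂ₖ₊₂ / ((2k + 2) (2k + 1) x²ᵏ⁺¹)`, counted from `k = 0`, of the Stirling
series of `log Γ(x)`. -/
noncomputable def stirlingTerm (k : ℕ) (x : ℝ) : ℝ :=
  bernoulli (2 * k + 2) / ((2 * k + 2) * (2 * k + 1) * x ^ (2 * k + 1))

/-- The remainder of the Stirling series of `log Γ(x)` after the elementary part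
`(x - 1/2) log x - x + (1/2) log (2π)` and the first `n` terms. -/
noncomputable def stirlingRemainder (n : ℕ) (x : ℝ) : ℝ :=
  log (Gamma x) - ((x - 1 / 2) * log x - x + 1 / 2 * log (2 * π) +
    ∑ k ∈ Finset.range n, stirlingTerm k x)

lemma stirlingRemainder_succ (n : ℕ) (x : ℝ) :
    stirlingRemainder (n + 1) x = stirlingRemainder n x - stirlingTerm n x := by
  rw [stirlingRemainder, stirlingRemainder, Finset.sum_range_succ]
  ring

lemma log_Gamma_add_one {x : ℝ} (hx : 0 < x) :
    log (Gamma (x + 1)) = log (Gamma x) + log x := by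
  rw [Gamma_add_one hx.ne', log_mul hx.ne' (Gamma_pos_of_pos hx).ne', add_comm]

section
variable {x : ℝ} (hx : 0 < x)
include hx

lemma stirlingTerm_sub_stirlingTerm_add_one (n : ℕ) :
    stirlingTerm n x - stirlingTerm n (x + 1) =
      bernoulliIntegral (2 * n + 3) x - bernoulliIntegral (2 * n + 1) x := by
  have hodd : bernoulli (2 * n + 3) = 0 :=
    bernoulli_eq_zero_of_odd ⟨n + 1, by ring⟩ (by lia)
  rw [bernoulliIntegral_eq_add_bernoulliIntegral_succ hx (by lia : 2 * n + 1 ≠ 0),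
    bernoulliIntegral_eq_add_bernoulliIntegral_succ hx (by lia : 2 * n + 1 + 1 ≠ 0), hodd]
  simp only [stirlingTerm]
  push_cast
  field_simp
  ring

lemma stirlingRemainder_sub_stirlingRemainder_add_one (n : ℕ) :
    stirlingRemainder n x - stirlingRemainder n (x + 1) = -bernoulliIntegral (2 * n + 1) x := by
  induction n with
  | zero =>
    simp only [stirlingRemainder, Finset.range_zero, Finset.sum_empty, log_Gamma_add_one hx,
      mul_zero, zero_add, bernoulliIntegral_one hx]
    ring
  | succ n ih =>
    rw [stirlingRemainder_succ, stirlingRemainder_succ, show 2 * (n + 1) + 1 = 2 * n + 3 by ring]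
    linear_combination ih - stirlingTerm_sub_stirlingTerm_add_one hx n

lemma neg_one_pow_mul_stirlingRemainder_add_one_le (n : ℕ) :
    (-1) ^ n * stirlingRemainder n (x + 1) ≤ (-1) ^ n * stirlingRemainder n x := by
  linear_combination neg_one_pow_mul_bernoulliIntegral_nonneg hx n -
    (-1) ^ n * stirlingRemainder_sub_stirlingRemainder_add_one hx n

end

/-! ### Limit of the remainder at infinity -/

lemma tendsto_add_mul_log_one_add_div (a b : ℝ) :
    Tendsto (fun y : ℝ => (y + a) * log (1 + b / y)) atTop (𝓝 b) := by
  have hone : Tendsto (fun y : ℝ => 1 + b / y) atTop (𝓝 1) := by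
    simpa using (tendsto_id.const_div_atTop b).const_add 1
  have hlog : Tendsto (fun y : ℝ => log (1 + b / y)) atTop (𝓝 0) := by
    simpa using hone.log one_ne_zero
  simpa [add_mul] using (tendsto_mul_log_one_add_div_atTop b).add (hlog.const_mul a)

lemma tendsto_stirlingTerm (k : ℕ) : Tendsto (stirlingTerm k) atTop (𝓝 0) :=
  ((tendsto_pow_atTop (by lia : 2 * k + 1 ≠ 0)).const_mul_atTop
    (by positivity : (0 : ℝ) < (2 * k + 2) * (2 * k + 1))).const_div_atTop _

lemma tendsto_log_stirlingSeq :
    Tendsto (fun n : ℕ => log (Stirling.stirlingSeq n)) atTop (𝓝 (log √π)) :=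
  Stirling.tendsto_stirlingSeq_sqrt_pi.log (by positivity)

section
variable {x : ℝ} (hx : 0 < x)
include hx

lemma stirlingRemainder_zero_add_nat {n : ℕ} (hn : n ≠ 0) :
    stirlingRemainder 0 (x + (n + 1 : ℕ)) =
      (log (Gamma x) - BohrMollerup.logGammaSeq x n) +
        (log (Stirling.stirlingSeq n) - log √π) -
        ((n + (x + 1 / 2)) * log (1 + (x + 1) / n) - (x + 1)) := by
  have hn' : (0 : ℝ) < n := by positivity
  have hGamma : log (Gamma (x + (n + 1 : ℕ))) = _ :=
    BohrMollerup.f_add_nat_eq (f := fun y => log (Gamma y)) log_Gamma_add_one hx (n + 1)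
  have hlog : log (1 + (x + 1) / n) = log (x + (n + 1)) - log n := by
    rw [← log_div (by positivity) hn'.ne', one_add_div hn'.ne']
    ring_nf
  rw [stirlingRemainder, hGamma, BohrMollerup.logGammaSeq, Stirling.log_stirlingSeq_formula, hlog,
    log_mul two_ne_zero hn'.ne', log_mul two_ne_zero pi_ne_zero, log_div hn'.ne' (exp_ne_zero 1),
    log_exp, log_sqrt pi_nonneg, Finset.range_zero, Finset.sum_empty]
  push_cast
  ring

lemma tendsto_stirlingRemainder_zero_add_nat :
    Tendsto (fun m : ℕ => stirlingRemainder 0 (x + m)) atTop (𝓝 0) := by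
  rw [← tendsto_add_atTop_iff_nat 1]
  have hlog := (tendsto_add_mul_log_one_add_div (x + 1 / 2) (x + 1)).comp
    (tendsto_natCast_atTop_atTop (R := ℝ))
  have hlim := (((BohrMollerup.tendsto_log_gamma hx).const_sub (log (Gamma x))).add
    (tendsto_log_stirlingSeq.sub_const (log √π))).sub (hlog.sub_const (x + 1))
  simp only [sub_self, add_zero] at hlim
  refine hlim.congr' ?_
  filter_upwards [eventually_ne_atTop 0] with n hn
  exact (stirlingRemainder_zero_add_nat hx hn).symm

lemma tendsto_stirlingRemainder_add_nat (n : ℕ) :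
    Tendsto (fun m : ℕ => stirlingRemainder n (x + m)) atTop (𝓝 0) := by
  induction n with
  | zero => exact tendsto_stirlingRemainder_zero_add_nat hx
  | succ n ih =>
    have hterm := (tendsto_stirlingTerm n).comp
      (tendsto_atTop_add_const_left atTop x (tendsto_natCast_atTop_atTop (R := ℝ)))
    simpa [stirlingRemainder_succ] using! ih.sub hterm

lemma neg_one_pow_mul_stirlingRemainder_nonneg (n : ℕ) :
    0 ≤ (-1) ^ n * stirlingRemainder n x := by
  have hanti : Antitone fun m : ℕ => (-1) ^ n * stirlingRemainder n (x + m) :=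
    antitone_nat_of_succ_le fun m => by
      rw [Nat.cast_succ, ← add_assoc]
      exact neg_one_pow_mul_stirlingRemainder_add_one_le (by positivity) n
  have hlim := (tendsto_stirlingRemainder_add_nat hx n).const_mul ((-1) ^ n)
  rw [mul_zero] at hlim
  simpa using hanti.le_of_tendsto hlim 0

lemma abs_stirlingRemainder_le (n : ℕ) : |stirlingRemainder n x| ≤ |stirlingTerm n x| := by
  have hn := neg_one_pow_mul_stirlingRemainder_nonneg hx n
  have hsucc := neg_one_pow_mul_stirlingRemainder_nonneg hx (n + 1)
  rw [stirlingRemainder_succ, pow_succ] at hsucc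
  calc |stirlingRemainder n x| = (-1) ^ n * stirlingRemainder n x := by
        rw [← abs_of_nonneg hn, abs_mul, abs_neg_one_pow, one_mul]
    _ ≤ (-1) ^ n * stirlingTerm n x := by linarith
    _ ≤ |(-1) ^ n * stirlingTerm n x| := le_abs_self _
    _ = |stirlingTerm n x| := by rw [abs_mul, abs_neg_one_pow, one_mul]

end

theorem stirling_remainder_bound_general (n : ℕ) {x : ℝ} (hx : 0 < x) :
    |log (Gamma x) - ((x - 1 / 2) * log x - x + 1 / 2 * log (2 * π) +
        ∑ k ∈ Finset.range n,
          bernoulli (2 * k + 2) / ((2 * k + 2) * (2 * k + 1) * x ^ (2 * k + 1)))| ≤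
      |(bernoulli (2 * n + 2) : ℝ)| / ((2 * n + 2) * (2 * n + 1) * x ^ (2 * n + 1)) := by
  have hdenom : 0 < (2 * n + 2) * (2 * n + 1) * x ^ (2 * n + 1) := by positivity
  simpa only [stirlingTerm, abs_div, abs_of_pos hdenom] using! abs_stirlingRemainder_le hx n

/-- Stirling series remainder bound with three Bernoulli terms: for every real `x > 0`,
`|ln Γ(x) − ((x − 1/2) ln x − x + (1/2) ln(2π) + 1/(12x) − 1/(360x³) + 1/(1260x⁵))|
  ≤ 1/(1680 x⁷)`. -/
theorem stirling_remainder_bound (x : ℝ) (hx : 0 < x) :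
    |Real.log (Real.Gamma x) -
        ((x - 1 / 2) * Real.log x - x + (1 / 2) * Real.log (2 * π) +
          1 / (12 * x) - 1 / (360 * x ^ 3) + 1 / (1260 * x ^ 5))| ≤
      1 / (1680 * x ^ 7) := by
  have h := stirling_remainder_bound_general 3 hx
  norm_num [Finset.sum_range_succ, bernoulli_four, bernoulli_six, bernoulli_eight] at h
  convert h using 1 <;> ring_nf
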